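/- Let f be a standard solution family. Then for all z, λ ∈ ℂ one has conj(f(z, λ)) = f(conj z, conj λ), where conj denotes complex conjugation. -/

import Mathlib

open Complex

/-- `f : ℂ × ℂ → ℂ` is a standard solution family for `f'' = (z³ + λ) f`:
for each `λ` the map `z ↦ f(z,λ)` is entire and solves the ODE, and it has the
Liouville–Green asymptotics `f(z,λ) = z^{-3/4} e^{-(2/5) z^{5/2}} (1 + O(z^{-1/2}))`
as `z → ∞` in the sector `|arg z| ≤ 3π/5 - ε`, uniformly for `λ` in compact sets. -/
def IsStdSolutionFamily (f : ℂ → ℂ → ℂ) : Prop :=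
  (∀ lam : ℂ, Differentiable ℂ (fun z => f z lam) ∧
    ∀ z : ℂ, deriv (deriv (fun w => f w lam)) z = (z ^ 3 + lam) * f z lam) ∧
  (∀ ε > (0 : ℝ), ∀ L : Set ℂ, IsCompact L →
    ∃ C > (0 : ℝ), ∃ R > (0 : ℝ), ∀ lam ∈ L, ∀ z : ℂ,
      R ≤ ‖z‖ → |Complex.arg z| ≤ 3 * Real.pi / 5 - ε →
      ‖f z lam * z ^ ((3 : ℂ) / 4) *
          Complex.exp ((2 / 5 : ℂ) * z ^ ((5 : ℂ) / 2)) - 1‖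
        ≤ C * ‖z‖ ^ (-(1 / 2) : ℝ))

open Filter Topology

theorem aux_bound (f : ℂ → ℂ → ℂ) (hf : IsStdSolutionFamily f) (lam : ℂ) :
    ∃ B R : ℝ, ∀ x : ℝ, R ≤ x → ‖deriv (fun w => f w lam) (x : ℂ)‖ ≤ B := by
  obtain ⟨h1, h2⟩ := hf
  obtain ⟨C, hC, R, hR, h⟩ := h2 (Real.pi / 5) (by positivity) {lam} isCompact_singleton
  refine ⟨(1 + C) / 1, R + 5, fun x hx => ?_⟩
  apply Complex.norm_deriv_le_of_forall_mem_sphere_norm_le one_pos (h1 lam).1.diffContOnCl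
  intro z hz
  have hz1 : ‖z - x‖ = 1 := by simpa [dist_eq_norm] using hz
  have hre : |z.re - x| ≤ 1 := by
    have := Complex.abs_re_le_norm (z - x); simp at this; linarith
  have him : |z.im| ≤ 1 := by
    have := Complex.abs_im_le_norm (z - x); simp at this; linarith
  have hre2 : R + 4 ≤ z.re := by have := abs_le.1 hre; linarith
  have hzn : R + 4 ≤ ‖z‖ := hre2.trans (Complex.re_le_norm z)
  have hz0 : z ≠ 0 := by rw [← norm_pos_iff]; linarith
  have hsin : 2 / 5 ≤ Real.sin (Real.pi / 5) := by
    have := Real.mul_le_sin (x := Real.pi / 5) (by positivity) (by linarith [Real.pi_pos])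
    have hp := Real.pi_pos
    have e : 2 / Real.pi * (Real.pi / 5) = 2 / 5 := by field_simp
    linarith
  have harg : |Complex.arg z| ≤ Real.pi / 5 := by
    have hq : |z.im / ‖z‖| ≤ Real.sin (Real.pi / 5) := by
      rw [abs_div, abs_norm, div_le_iff₀ (by linarith)]
      nlinarith
    rw [Complex.arg_of_re_nonneg (by linarith)]
    have hp := Real.pi_pos
    have hb := abs_le.1 hq
    rw [abs_le]
    constructor
    · rw [Real.le_arcsin_iff_sin_le' ⟨by linarith, by linarith⟩, Real.sin_neg]; exact hb.1
    · rw [Real.arcsin_le_iff_le_sin' ⟨by linarith, by linarith⟩]; exact hb.2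
  have key := h lam rfl z (by linarith) (by linarith [Real.pi_pos])
  have hpow : ‖z‖ ^ (-(1 / 2) : ℝ) ≤ 1 :=
    Real.rpow_le_one_of_one_le_of_nonpos (by linarith) (by norm_num)
  have hA : 1 ≤ ‖z ^ ((3 : ℂ) / 4)‖ := by
    have : ((3 : ℂ) / 4) = ((3 / 4 : ℝ) : ℂ) := by push_cast; rfl
    rw [this, Complex.norm_cpow_real]
    exact Real.one_le_rpow (by linarith) (by norm_num)
  have hE : 1 ≤ ‖Complex.exp ((2 / 5 : ℂ) * z ^ ((5 : ℂ) / 2))‖ := by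
    rw [Complex.norm_exp, Real.one_le_exp_iff]
    have e1 : ((5 : ℂ) / 2) = ((5 / 2 : ℝ) : ℂ) := by push_cast; rfl
    have e2 : ((2 : ℂ) / 5) = ((2 / 5 : ℝ) : ℂ) := by push_cast; rfl
    rw [e2, Complex.re_ofReal_mul, Complex.cpow_def_of_ne_zero hz0, e1, Complex.exp_re]
    have hb := abs_le.1 harg
    have : 0 ≤ Real.cos (Complex.log z * ((5 / 2 : ℝ) : ℂ)).im := by
      rw [Complex.im_mul_ofReal, Complex.log_im]
      apply Real.cos_nonneg_of_neg_pi_div_two_le_of_le <;> linarith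
    positivity
  have hT : ‖f z lam * z ^ ((3 : ℂ) / 4) * Complex.exp ((2 / 5 : ℂ) * z ^ ((5 : ℂ) / 2))‖
      ≤ 1 + C := by
    have := norm_le_norm_add_norm_sub' (f z lam * z ^ ((3 : ℂ) / 4) *
      Complex.exp ((2 / 5 : ℂ) * z ^ ((5 : ℂ) / 2))) 1
    rw [norm_one] at this
    nlinarith
  rw [norm_mul, norm_mul] at hT
  refine le_trans ?_ hT
  have h0 := norm_nonneg (f z lam)
  calc ‖f z lam‖ ≤ ‖f z lam‖ * ‖z ^ ((3 : ℂ) / 4)‖ := le_mul_of_one_le_right h0 hA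
    _ ≤ _ := le_mul_of_one_le_right (by positivity) hE

/-- The real normalising factor. -/
noncomputable def aFac (x : ℝ) : ℝ := x ^ (3 / 4 : ℝ) * Real.exp (2 / 5 * x ^ (5 / 2 : ℝ))

theorem aFac_tendsto : Tendsto aFac atTop atTop := by
  refine tendsto_atTop_mono' _ ?_ (tendsto_rpow_atTop (y := 3 / 4) (by norm_num))
  filter_upwards [eventually_ge_atTop 0] with x hx
  exact le_mul_of_one_le_right (by positivity) (Real.one_le_exp (by positivity))

theorem aux_lim (f : ℂ → ℂ → ℂ) (hf : IsStdSolutionFamily f) (lam : ℂ) :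
    Tendsto (fun x : ℝ => f x lam * (aFac x : ℂ)) atTop (𝓝 1) := by
  obtain ⟨h1, h2⟩ := hf
  obtain ⟨C, hC, R, hR, h⟩ := h2 (Real.pi / 5) (by positivity) {lam} isCompact_singleton
  rw [tendsto_iff_norm_sub_tendsto_zero]
  have hlim : Tendsto (fun x : ℝ => C * x ^ (-(1 / 2) : ℝ)) atTop (𝓝 0) := by
    simpa using (tendsto_rpow_neg_atTop (y := 1 / 2) (by norm_num)).const_mul C
  refine squeeze_zero' (Eventually.of_forall fun _ => norm_nonneg _) ?_ hlim
  filter_upwards [eventually_ge_atTop R] with x hx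
  have hx0 : 0 ≤ x := by linarith
  have hn : ‖(x : ℂ)‖ = x := by simp [abs_of_nonneg hx0]
  have := h lam rfl x (by rw [hn]; exact hx)
    (by rw [Complex.arg_ofReal_of_nonneg hx0]; simp; linarith [Real.pi_pos])
  rw [hn] at this
  have e : (aFac x : ℂ) = (x : ℂ) ^ ((3 : ℂ) / 4) *
      Complex.exp ((2 / 5 : ℂ) * (x : ℂ) ^ ((5 : ℂ) / 2)) := by
    unfold aFac
    push_cast [Complex.ofReal_cpow hx0]
    rfl
  rw [e, ← mul_assoc]
  exact this

theorem aux_zero (f : ℂ → ℂ → ℂ) (hf : IsStdSolutionFamily f) (lam : ℂ) :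
    Tendsto (fun x : ℝ => f x lam) atTop (𝓝 0) := by
  have h : Tendsto (fun x : ℝ => (((aFac x)⁻¹ : ℝ) : ℂ)) atTop (𝓝 ((0 : ℝ) : ℂ)) :=
    (Complex.continuous_ofReal.tendsto 0).comp aFac_tendsto.inv_tendsto_atTop
  have := (aux_lim f hf lam).mul h
  simp only [ofReal_zero, mul_zero] at this
  refine this.congr' ?_
  filter_upwards [aFac_tendsto.eventually_gt_atTop 0] with x hx
  have : (aFac x : ℂ) ≠ 0 := by exact_mod_cast hx.ne'
  push_cast
  field_simp

/-- The standard solution is real in the sense `conj (f(z,λ)) = f(conj z, conj λ)`. -/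
theorem std_solution_conj (f : ℂ → ℂ → ℂ) (hf : IsStdSolutionFamily f) :
    ∀ z lam : ℂ, (starRingEnd ℂ) (f z lam) = f ((starRingEnd ℂ) z) ((starRingEnd ℂ) lam) := by
  intro z₀ lam
  set mu := (starRingEnd ℂ) lam with hmu
  let u : ℂ → ℂ := fun w => f w mu
  let g : ℂ → ℂ := fun w => (starRingEnd ℂ) (f ((starRingEnd ℂ) w) lam)
  have hu : Differentiable ℂ u := (hf.1 mu).1
  have hFl : Differentiable ℂ (fun w => f w lam) := (hf.1 lam).1
  have hdg : ∀ w, HasDerivAt g ((starRingEnd ℂ) (deriv (fun w => f w lam) ((starRingEnd ℂ) w))) w := by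
    intro w
    have := (hFl ((starRingEnd ℂ) w)).hasDerivAt.conj_conj
    simpa [g, Function.comp_def] using this
  have hg : Differentiable ℂ g := fun w => (hdg w).differentiableAt
  have hg' : deriv g = fun w => (starRingEnd ℂ) (deriv (fun w => f w lam) ((starRingEnd ℂ) w)) :=
    funext fun w => (hdg w).deriv
  have hu2 : ∀ w, HasDerivAt (deriv u) ((w ^ 3 + mu) * u w) w := by
    intro w
    have := (hu.deriv w).hasDerivAt
    rwa [(hf.1 mu).2 w] at this
  have hg2 : ∀ w, HasDerivAt (deriv g) ((w ^ 3 + mu) * g w) w := by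
    intro w
    have := (hFl.deriv ((starRingEnd ℂ) w)).hasDerivAt.conj_conj
    rw [(hf.1 lam).2] at this
    rw [hg']
    simpa [g, Function.comp_def, hmu] using this
  let W : ℂ → ℂ := fun w => u w * deriv g w - deriv u w * g w
  have hW : ∀ w, HasDerivAt W 0 w := by
    intro w
    have := ((hu w).hasDerivAt.mul (hg2 w)).sub ((hu2 w).mul (hg w).hasDerivAt)
    refine HasDerivAt.congr_deriv (f := W) this ?_
    ring
  have hWc : ∀ a b, W a = W b :=
    is_const_of_deriv_eq_zero (fun w => (hW w).differentiableAt) fun w => (hW w).deriv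
  have hu0 : Tendsto (fun x : ℝ => u x) atTop (𝓝 0) := aux_zero f hf mu
  have hg0 : Tendsto (fun x : ℝ => g x) atTop (𝓝 0) := by
    have := (Complex.continuous_conj.tendsto 0).comp (aux_zero f hf lam)
    simpa [g, Function.comp_def] using this
  obtain ⟨B1, R1, hB1⟩ := aux_bound f hf mu
  obtain ⟨B2, R2, hB2⟩ := aux_bound f hf lam
  have hWlim : Tendsto (fun x : ℝ => W x) atTop (𝓝 0) := by
    have l1 : Tendsto (fun x : ℝ => u x * deriv g x) atTop (𝓝 0) := by
      refine hu0.zero_mul_isBoundedUnder_le ⟨B2, ?_⟩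
      rw [eventually_map]
      filter_upwards [eventually_ge_atTop R2] with x hx
      simpa [hg'] using hB2 x hx
    have l2 : Tendsto (fun x : ℝ => deriv u x * g x) atTop (𝓝 0) := by
      refine isBoundedUnder_le_mul_tendsto_zero ⟨B1, ?_⟩ hg0
      rw [eventually_map]
      filter_upwards [eventually_ge_atTop R1] with x hx
      exact hB1 x hx
    simpa [W] using l1.sub l2
  have hW0 : ∀ w, W w = 0 := by
    intro w
    have : Tendsto (fun x : ℝ => W x) atTop (𝓝 (W w)) :=
      tendsto_const_nhds.congr fun x => hWc w x
    exact tendsto_nhds_unique this hWlim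
  have hul : Tendsto (fun x : ℝ => u x * (aFac x : ℂ)) atTop (𝓝 1) := aux_lim f hf mu
  have hgl : Tendsto (fun x : ℝ => g x * (aFac x : ℂ)) atTop (𝓝 1) := by
    have := (Complex.continuous_conj.tendsto 1).comp (aux_lim f hf lam)
    simpa [g, Function.comp_def] using this
  obtain ⟨R, hR⟩ := eventually_atTop.1
    ((hgl.eventually_ne one_ne_zero).and (aFac_tendsto.eventually_gt_atTop 0))
  have hgne : ∀ x : ℝ, R ≤ x → g x ≠ 0 := fun x hx h => (hR x hx).1 (by rw [h, zero_mul])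
  have hq : ∀ x : ℝ, R ≤ x → HasDerivAt (fun x : ℝ => u x / g x) 0 x := by
    intro x hx
    have := ((hu x).hasDerivAt.div (hg x).hasDerivAt (hgne x hx)).comp_ofReal
    have hw : u x * deriv g x - deriv u x * g x = 0 := hW0 x
    refine HasDerivAt.congr_deriv (f := fun x : ℝ => u x / g x) this ?_
    rw [div_eq_zero_iff]
    left
    linear_combination -hw
  have hqc : ∀ x : ℝ, R ≤ x → u x / g x = u R / g R := by
    intro x hx
    refine constant_of_has_deriv_right_zero (f := fun x : ℝ => u x / g x) (a := R) (b := x)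
      (fun y hy => (hq y hy.1).continuousAt.continuousWithinAt)
      (fun y hy => (hq y hy.1).hasDerivWithinAt) x ⟨hx, le_rfl⟩
  have hql : Tendsto (fun x : ℝ => u x / g x) atTop (𝓝 1) := by
    have := hul.div hgl one_ne_zero
    rw [div_one] at this
    refine this.congr' ?_
    filter_upwards [eventually_ge_atTop R] with x hx
    have ha : (aFac x : ℂ) ≠ 0 := by exact_mod_cast (hR x hx).2.ne'
    exact mul_div_mul_right _ _ ha
  have hc1 : u R / g R = 1 := by
    refine tendsto_nhds_unique (tendsto_const_nhds.congr' ?_) hql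
    filter_upwards [eventually_ge_atTop R] with x hx
    exact (hqc x hx).symm
  have heq : ∀ x : ℝ, R ≤ x → u x = g x := by
    intro x hx
    have := (hqc x hx).trans hc1
    rwa [div_eq_one_iff_eq (hgne x hx)] at this
  have hug : u = g := by
    refine AnalyticOnNhd.eq_of_frequently_eq (z₀ := (R : ℂ))
      (fun w _ => hu.analyticAt w) (fun w _ => hg.analyticAt w) ?_
    have ht : Tendsto (fun x : ℝ => (x : ℂ)) (𝓝[>] R) (𝓝[≠] (R : ℂ)) := by
      refine tendsto_nhdsWithin_iff.2 ⟨?_, ?_⟩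
      · exact (Complex.continuous_ofReal.tendsto R).mono_left nhdsWithin_le_nhds
      · filter_upwards [self_mem_nhdsWithin] with x hx
        have : x ≠ R := ne_of_gt hx
        simpa using this
    refine ht.frequently (Eventually.frequently ?_)
    filter_upwards [self_mem_nhdsWithin] with x hx
    exact heq x (le_of_lt hx)
  have := congrFun hug ((starRingEnd ℂ) z₀)
  simp only [u, g, Complex.conj_conj] at this
  exact this.symm
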